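/- arXiv:2310.14352 — 5 statements merged into one kernel-verified Lean document; each statement's English description precedes it below -/
import Mathlib

section
/- For every integer a, the polynomial f(x) = x^3 - a x^2 - (a+3) x - 1 is irreducible over ℚ, and its splitting field over ℚ has degree 3; in particular f defines a cyclic cubic Galois extension of ℚ. -/
open Polynomial

theorem shanks_no_rat_root (a : ℤ) (x : ℚ)
    (h : x ^ 3 - a * x ^ 2 - (a + 3) * x - 1 = 0) : False := by
  have hd : (x.den : ℚ) ≠ 0 := by exact_mod_cast x.den_nz
  have hx : x = x.num / (x.den : ℤ) := by
    push_cast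
    exact (Rat.num_div_den x).symm
  have hc := x.reduced
  generalize hp : x.num = p at *
  generalize hq : x.den = q at *
  have hZ : p ^ 3 - a * p ^ 2 * q - (a + 3) * p * (q : ℤ) ^ 2 - (q : ℤ) ^ 3 = 0 := by
    rw [hx] at h
    push_cast at h
    field_simp at h
    have h2 : ((p ^ 3 - a * p ^ 2 * q - (a + 3) * p * (q : ℤ) ^ 2 - (q : ℤ) ^ 3 : ℤ) : ℚ) = 0 := by
      push_cast
      linear_combination h
    exact_mod_cast h2
  have hne : ¬ (Even p ∧ Even (q : ℤ)) := by
    rintro ⟨h1, h2⟩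
    have h3 : 2 ∣ p.natAbs := Int.natCast_dvd.1 (by simpa using h1.two_dvd)
    have h4 : 2 ∣ q := by exact_mod_cast h2.two_dvd
    have := Nat.dvd_gcd h3 h4
    rw [hc] at this
    omega
  have he : Even (p ^ 3 - a * p ^ 2 * q - (a + 3) * p * (q : ℤ) ^ 2 - (q : ℤ) ^ 3) := by
    rw [hZ]; exact Even.zero
  have h3 : ¬ Even (3 : ℤ) := by decide
  simp only [Int.even_sub, Int.even_mul, Int.even_pow, Int.even_add] at he
  by_cases hp2 : Even p <;> by_cases hq2 : Even (q : ℤ) <;> by_cases ha : Even a <;> simp_all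

theorem shanks_third {K : Type*} [Field K] (a r s : K)
    (hr : r ^ 3 - a * r ^ 2 - (a + 3) * r - 1 = 0)
    (hs : s ^ 3 - a * s ^ 2 - (a + 3) * s - 1 = 0) :
    s = r ∨ s = -1 / (1 + r) ∨ s = -(1 + r) / r := by
  have h0 : r ≠ 0 := by
    rintro rfl
    simp at hr
  have h1 : 1 + r ≠ 0 := by
    intro h
    have : (1 : K) = 0 := by
      have h' : r = -1 := by linear_combination h
      rw [h'] at hr
      linear_combination hr
    exact one_ne_zero this
  have key : (s - r) * ((s * (1 + r) + 1) * (s * r + (1 + r))) = 0 := by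
    linear_combination (r ^ 2 + r) * hs - (s ^ 2 + s) * hr
  rcases mul_eq_zero.1 key with h | h
  · left; linear_combination h
  rcases mul_eq_zero.1 h with h | h
  · right; left; rw [eq_div_iff h1]; linear_combination h
  · right; right; rw [eq_div_iff h0]; linear_combination h

theorem shanks_finrank (a : ℤ) (f : ℚ[X]) (hdeg : f.natDegree = 3) (hmon : f.Monic)
    (hirr : Irreducible f) (L : Type) [Field L] [Algebra ℚ L] [IsSplittingField ℚ L f]
    (hev : ∀ s : L, aeval s f = s ^ 3 - (a : L) * s ^ 2 - ((a : L) + 3) * s - 1) :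
    Module.finrank ℚ L = 3 := by
  obtain ⟨r, hr⟩ := (IsSplittingField.splits L f).exists_eval_eq_zero (by
    rw [degree_map]
    exact (degree_pos_of_irreducible hirr).ne')
  rw [eval_map_algebraMap] at hr
  have hmin : f = minpoly ℚ r := minpoly.eq_of_irreducible_of_monic hirr hr hmon
  have hint : IsIntegral ℚ r := ⟨f, hmon, by rwa [← aeval_def]⟩
  have htop : IntermediateField.adjoin ℚ {r} = ⊤ := by
    rw [← IntermediateField.toSubalgebra_injective.eq_iff, IntermediateField.top_toSubalgebra,
      eq_top_iff, ← IsSplittingField.adjoin_rootSet L f, Algebra.adjoin_le_iff]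
    intro s hs
    have hs' := aeval_eq_zero_of_mem_rootSet hs
    rw [hev] at hs' hr
    have hrm := IntermediateField.mem_adjoin_simple_self ℚ r
    have h1m := add_mem (one_mem (IntermediateField.adjoin ℚ {r})) hrm
    show s ∈ IntermediateField.adjoin ℚ {r}
    rcases shanks_third _ r s hr hs' with h | h | h <;> rw [h]
    · exact hrm
    · exact div_mem (neg_mem (one_mem _)) h1m
    · exact div_mem (neg_mem h1m) hrm
  have hfr := IntermediateField.adjoin.finrank hint
  rw [htop, IntermediateField.finrank_top', ← hmin, hdeg] at hfr
  exact hfr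

/-- For every integer `a`, the Shanks polynomial `f(x) = x^3 - a x^2 - (a+3) x - 1`
is irreducible over `ℚ` and its splitting field over `ℚ` has degree `3`;
in particular it defines a cyclic cubic Galois extension of `ℚ`. -/
theorem shanks_cubic_irreducible_splittingField_degree_three (a : ℤ) :
    Irreducible (X ^ 3 - C (a : ℚ) * X ^ 2 - C ((a : ℚ) + 3) * X - 1) ∧
      Module.finrank ℚ
        (X ^ 3 - C (a : ℚ) * X ^ 2 - C ((a : ℚ) + 3) * X - 1 : ℚ[X]).SplittingField = 3 := by
  have hdeg : (X ^ 3 - C (a : ℚ) * X ^ 2 - C ((a : ℚ) + 3) * X - 1 : ℚ[X]).natDegree = 3 := by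
    compute_degree!
  have hmon : (X ^ 3 - C (a : ℚ) * X ^ 2 - C ((a : ℚ) + 3) * X - 1 : ℚ[X]).Monic := by
    monicity!
  have hev : ∀ (K : Type) [Field K] [Algebra ℚ K] (s : K),
      aeval s (X ^ 3 - C (a : ℚ) * X ^ 2 - C ((a : ℚ) + 3) * X - 1 : ℚ[X]) =
        s ^ 3 - (a : K) * s ^ 2 - ((a : K) + 3) * s - 1 := by
    intro K _ _ s
    simp
  have hirr : Irreducible (X ^ 3 - C (a : ℚ) * X ^ 2 - C ((a : ℚ) + 3) * X - 1) := by
    refine irreducible_of_degree_le_three_of_not_isRoot (by rw [hdeg]; decide) ?_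
    intro x hx
    refine shanks_no_rat_root a x ?_
    simpa using hx
  refine ⟨hirr, ?_⟩
  generalize (X ^ 3 - C (a : ℚ) * X ^ 2 - C ((a : ℚ) + 3) * X - 1 : ℚ[X]) = f at *
  have hsplit : IsSplittingField ℚ f.SplittingField f := by
    convert IsSplittingField.splittingField f
    exact Subsingleton.elim _ _
  exact shanks_finrank a f hdeg hmon hirr f.SplittingField (hev f.SplittingField)
end

section
/- Let ℓ = a^2 + 3a + 9 be a Shanks prime with parameter a, and let L be the splitting field over ℚ of f(x) = x^3 - a x^2 - (a+3) x - 1 (a cubic Galois extension of ℚ). Then the discriminant of the number field L equals ℓ^2. -/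
open Polynomial

theorem shanks_aux_natDegree (a : ℤ) :
    (X ^ 3 - C (a : ℚ) * X ^ 2 - C ((a : ℚ) + 3) * X - 1 : ℚ[X]).natDegree = 3 := by
  compute_degree!

theorem shanks_aux_monic (a : ℤ) :
    (X ^ 3 - C (a : ℚ) * X ^ 2 - C ((a : ℚ) + 3) * X - 1 : ℚ[X]).Monic := by
  monicity!

theorem shanks_aux_nextCoeff (a : ℤ) :
    (X ^ 3 - C (a : ℚ) * X ^ 2 - C ((a : ℚ) + 3) * X - 1 : ℚ[X]).nextCoeff = -a := by
  rw [nextCoeff_of_natDegree_pos (by rw [shanks_aux_natDegree]; norm_num), shanks_aux_natDegree]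
  simp only [coeff_sub, coeff_C_mul, coeff_X_pow, coeff_X, coeff_one]
  norm_num

theorem shanks_aux_irred (a : ℤ) :
    Irreducible (X ^ 3 - C (a : ℚ) * X ^ 2 - C ((a : ℚ) + 3) * X - 1 : ℚ[X]) := by
  rw [(shanks_aux_monic a).irreducible_iff_roots_eq_zero_of_degree_le_three
    (by rw [shanks_aux_natDegree]; norm_num) (by rw [shanks_aux_natDegree])]
  rw [Multiset.eq_zero_iff_forall_notMem]
  intro q hq
  have h := (mem_roots'.1 hq).2
  simp only [IsRoot.def, eval_sub, eval_mul, eval_pow, eval_X, eval_C, eval_one] at h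
  have hint : IsIntegral ℤ q := by
    refine ⟨X ^ 3 - C a * X ^ 2 - C (a + 3) * X - 1, by monicity!, ?_⟩
    simp only [eval₂_sub, eval₂_mul, eval₂_pow, eval₂_X, eval₂_C, eval₂_one, algebraMap_int_eq]
    simp only [eq_intCast]
    push_cast
    exact h
  obtain ⟨n, rfl⟩ := IsIntegrallyClosed.isIntegral_iff.1 hint
  simp only [algebraMap_int_eq, eq_intCast] at h
  have h' : n ^ 3 - a * n ^ 2 - (a + 3) * n - 1 = 0 := by exact_mod_cast h
  have h1 : n ∣ 1 := ⟨n ^ 2 - a * n - (a + 3), by linear_combination -h'⟩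
  rcases Int.isUnit_iff.1 (isUnit_of_dvd_one h1) with rfl | rfl
  · ring_nf at h'; omega
  · ring_nf at h'; omega

theorem shanks_aux_aeval (a : ℤ) (L : Type) [Field L] [NumberField L] (x : L) :
    aeval x (X ^ 3 - C (a : ℚ) * X ^ 2 - C ((a : ℚ) + 3) * X - 1 : ℚ[X])
      = x ^ 3 - a * x ^ 2 - (a + 3) * x - 1 := by
  simp

theorem shanks_aux_minpoly (a : ℤ) (L : Type) [Field L] [NumberField L] (x : L)
    (hx : x ^ 3 - a * x ^ 2 - (a + 3) * x - 1 = 0) :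
    minpoly ℚ x = (X ^ 3 - C (a : ℚ) * X ^ 2 - C ((a : ℚ) + 3) * X - 1 : ℚ[X]) :=
  (minpoly.eq_of_irreducible_of_monic (shanks_aux_irred a)
    (by rw [shanks_aux_aeval, hx]) (shanks_aux_monic a)).symm

theorem shanks_aux_trace (a : ℤ) (L : Type) [Field L] [NumberField L] (x : L)
    (h3 : Module.finrank ℚ L = 3)
    (hx : x ^ 3 - a * x ^ 2 - (a + 3) * x - 1 = 0) :
    Algebra.trace ℚ L x = a := by
  have h1 : Module.finrank ℚ (IntermediateField.adjoin ℚ {x}) = 3 := by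
    rw [IntermediateField.adjoin.finrank (Algebra.IsIntegral.isIntegral x),
      shanks_aux_minpoly a L x hx, shanks_aux_natDegree]
  have h2 := Module.finrank_mul_finrank ℚ (IntermediateField.adjoin ℚ {x}) L
  rw [h1, h3] at h2
  have h4 : Module.finrank (IntermediateField.adjoin ℚ {x}) L = 1 := by omega
  rw [trace_eq_finrank_mul_minpoly_nextCoeff, h4, shanks_aux_minpoly a L x hx,
    shanks_aux_nextCoeff]
  simp

theorem shanks_aux_finrank (a : ℤ) (L : Type) [Field L] [NumberField L]
    (hL : IsSplittingField ℚ L (X ^ 3 - C (a : ℚ) * X ^ 2 - C ((a : ℚ) + 3) * X - 1))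
    (t : L) (ht : t ^ 3 - a * t ^ 2 - (a + 3) * t - 1 = 0) :
    Module.finrank ℚ L = 3 := by
  rw [← (Field.primitive_element_iff_minpoly_natDegree_eq ℚ t).1,
    shanks_aux_minpoly a L t ht, shanks_aux_natDegree]
  rw [eq_top_iff]
  have key : Algebra.adjoin ℚ ((X ^ 3 - C (a : ℚ) * X ^ 2 - C ((a : ℚ) + 3) * X - 1 : ℚ[X]).rootSet L)
      ≤ (IntermediateField.adjoin ℚ {t}).toSubalgebra := by
    rw [Algebra.adjoin_le_iff]
    intro y hy
    have hy := (mem_rootSet.1 hy).2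
    rw [shanks_aux_aeval] at hy
    have hf : (y - t) * ((y - (a + 2 + a * t - t ^ 2)) * (y - (t ^ 2 - (a + 1) * t - 2))) = 0 := by
      linear_combination hy - (-(a + 1 - t) * y + t * (a + 1 - t) + 1) * ht
    have mt : t ∈ IntermediateField.adjoin ℚ {t} := IntermediateField.mem_adjoin_simple_self ℚ t
    have ma : (a : L) ∈ IntermediateField.adjoin ℚ {t} := intCast_mem _ a
    have m1 : (1 : L) ∈ IntermediateField.adjoin ℚ {t} := one_mem _
    have m2 : (2 : L) ∈ IntermediateField.adjoin ℚ {t} := ofNat_mem _ 2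
    change y ∈ IntermediateField.adjoin ℚ {t}
    rcases mul_eq_zero.1 hf with h | h
    · rw [sub_eq_zero.1 h]; exact mt
    rcases mul_eq_zero.1 h with h | h
    · rw [sub_eq_zero.1 h]
      exact sub_mem (add_mem (add_mem ma m2) (mul_mem ma mt)) (pow_mem mt 2)
    · rw [sub_eq_zero.1 h]
      exact sub_mem (sub_mem (pow_mem mt 2) (mul_mem (add_mem ma m1) mt)) m2
  rw [hL.adjoin_rootSet'] at key
  intro y _
  exact key Algebra.mem_top

/-- Let `ℓ = a^2 + 3a + 9` be a Shanks prime with parameter `a ≥ -1`, and let `L` be the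
splitting field over `ℚ` of `f(x) = x^3 - a x^2 - (a+3) x - 1`.  Then the discriminant of
the number field `L` equals `ℓ^2`. -/
theorem discr_of_shanks_splitting_field (a : ℤ) (ha : -1 ≤ a)
    (hℓ : Prime (a ^ 2 + 3 * a + 9))
    (L : Type) [Field L] [NumberField L]
    (hL : IsSplittingField ℚ L (X ^ 3 - C (a : ℚ) * X ^ 2 - C ((a : ℚ) + 3) * X - 1)) :
    NumberField.discr L = (a ^ 2 + 3 * a + 9) ^ 2 := by
  obtain ⟨t, ht⟩ : ∃ t : L, t ^ 3 - a * t ^ 2 - (a + 3) * t - 1 = 0 := by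
    obtain ⟨t, ht⟩ := hL.splits'.exists_eval_eq_zero (by
      rw [degree_map, degree_eq_natDegree (shanks_aux_monic a).ne_zero, shanks_aux_natDegree]
      norm_num)
    refine ⟨t, ?_⟩
    rw [← shanks_aux_aeval, aeval_def, ← eval_map]
    exact ht
  have h3 := shanks_aux_finrank a L hL t ht
  have tint : ∀ m : ℤ, Algebra.trace ℚ L (m : L) = 3 * m := by
    intro m
    have := Algebra.trace_algebraMap (S := L) (m : ℚ)
    rw [h3] at this
    simpa using this
  have tmul : ∀ (m : ℤ) (x : L), Algebra.trace ℚ L (m * x) = m * Algebra.trace ℚ L x := by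
    intro m x
    have := map_smul (Algebra.trace ℚ L) (m : ℚ) x
    rw [Algebra.smul_def] at this
    simpa using this
  have t1 := shanks_aux_trace a L t h3 ht
  have hu : (a + 2 + a * t - t ^ 2) ^ 3 - a * (a + 2 + a * t - t ^ 2) ^ 2
      - (a + 3) * (a + 2 + a * t - t ^ 2) - 1 = 0 := by
    linear_combination (-(a + 1 - t) * (a + 2 + a * t - t ^ 2) + t * (a + 1 - t) + 1) * ht
  have tu := shanks_aux_trace a L _ h3 hu
  have t0 : Algebra.trace ℚ L 1 = 3 := by simpa using tint 1
  have t2 : Algebra.trace ℚ L (t ^ 2) = a ^ 2 + 2 * a + 6 := by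
    have e : (a + 2 + a * t - t ^ 2 : L) = ((a + 2 : ℤ) : L) + (a : ℤ) * t - t ^ 2 := by
      push_cast; ring
    rw [e, map_sub, map_add, tint, tmul, t1] at tu
    push_cast at tu
    linear_combination -tu
  have t3 : Algebra.trace ℚ L (t ^ 3) = a * (a ^ 2 + 2 * a + 6) + (a + 3) * a + 3 := by
    have e : t ^ 3 = (a : ℤ) * t ^ 2 + ((a + 3 : ℤ) : L) * t + 1 := by
      push_cast; linear_combination ht
    rw [e, map_add, map_add, tmul, tmul, t1, t2, t0]
    push_cast; ring
  have t4 : Algebra.trace ℚ L (t ^ 4) = a * (a * (a ^ 2 + 2 * a + 6) + (a + 3) * a + 3)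
      + (a + 3) * (a ^ 2 + 2 * a + 6) + a := by
    have e : t ^ 4 = (a : ℤ) * t ^ 3 + ((a + 3 : ℤ) : L) * t ^ 2 + t := by
      push_cast; linear_combination t * ht
    rw [e, map_add, map_add, tmul, tmul, t1, t2, t3]
    push_cast; ring
  have hint : IsIntegral ℤ t := by
    refine ⟨X ^ 3 - C a * X ^ 2 - C (a + 3) * X - 1, by monicity!, ?_⟩
    simp only [eval₂_sub, eval₂_mul, eval₂_pow, eval₂_X, eval₂_C, eval₂_one, algebraMap_int_eq]
    simp only [eq_intCast]
    push_cast
    exact ht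
  let s : NumberField.RingOfIntegers L := ⟨t, hint⟩
  have hs : (s : L) = t := rfl
  have s0 : Algebra.trace ℤ (NumberField.RingOfIntegers L) 1 = 3 := by
    have := Algebra.coe_trace_int (1 : NumberField.RingOfIntegers L)
    change _ = Algebra.trace ℚ L 1 at this
    rw [t0] at this
    exact_mod_cast this
  have s1 : Algebra.trace ℤ (NumberField.RingOfIntegers L) s = a := by
    have := Algebra.coe_trace_int s
    rw [hs, t1] at this
    exact_mod_cast this
  have s2 : Algebra.trace ℤ (NumberField.RingOfIntegers L) (s ^ 2) = a ^ 2 + 2 * a + 6 := by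
    have := Algebra.coe_trace_int (s ^ 2)
    change _ = Algebra.trace ℚ L (t ^ 2) at this
    rw [t2] at this
    exact_mod_cast this
  have s3 : Algebra.trace ℤ (NumberField.RingOfIntegers L) (s ^ 3) =
      a * (a ^ 2 + 2 * a + 6) + (a + 3) * a + 3 := by
    have := Algebra.coe_trace_int (s ^ 3)
    change _ = Algebra.trace ℚ L (t ^ 3) at this
    rw [t3] at this
    exact_mod_cast this
  have s4 : Algebra.trace ℤ (NumberField.RingOfIntegers L) (s ^ 4) =
      a * (a * (a ^ 2 + 2 * a + 6) + (a + 3) * a + 3)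
      + (a + 3) * (a ^ 2 + 2 * a + 6) + a := by
    have := Algebra.coe_trace_int (s ^ 4)
    change _ = Algebra.trace ℚ L (t ^ 4) at this
    rw [t4] at this
    exact_mod_cast this
  let b : Module.Basis (Fin 3) ℤ (NumberField.RingOfIntegers L) :=
    Module.finBasisOfFinrankEq ℤ _ ((NumberField.RingOfIntegers.rank L).trans h3)
  let v : Fin 3 → NumberField.RingOfIntegers L := fun i => s ^ (i : ℕ)
  have hv : Algebra.discr ℤ v = (a ^ 2 + 3 * a + 9) ^ 2 := by
    rw [Algebra.discr_def, Matrix.det_fin_three]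
    simp only [Algebra.traceMatrix_apply, Algebra.traceForm_apply, v, ← pow_add]
    norm_num [s0, s1, s2, s3, s4]
    ring
  have hP := Algebra.discr_of_matrix_vecMul b (b.toMatrix v)
  rw [Module.Basis.toMatrix_map_vecMul, hv, NumberField.discr_eq_discr] at hP
  have hd := NumberField.abs_discr_gt_two (K := L) (by rw [h3]; norm_num)
  have hdvd : (b.toMatrix v).det ∣ a ^ 2 + 3 * a + 9 :=
    (Int.pow_dvd_pow_iff two_ne_zero).1 ⟨_, hP⟩
  obtain ⟨c, hc⟩ := hdvd
  have hne := hℓ.ne_zero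
  rcases hℓ.irreducible.isUnit_or_isUnit hc with h | h
  · have : (b.toMatrix v).det ^ 2 = 1 := by
      rcases Int.isUnit_iff.1 h with h | h <;> rw [h] <;> norm_num
    rw [hP, this, one_mul]
  · exfalso
    have h2 : (a ^ 2 + 3 * a + 9) ^ 2 = (b.toMatrix v).det ^ 2 := by
      rw [hc]
      rcases Int.isUnit_iff.1 h with h | h <;> rw [h] <;> ring
    rw [← h2] at hP
    have : NumberField.discr L = 1 :=
      mul_left_cancel₀ (pow_ne_zero 2 hne) (by rw [← hP, mul_one])
    rw [this] at hd
    norm_num at hd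
end

section
/- Let ℓ be a prime with ℓ ≡ 1 (mod 3), and let L be the unique degree-3 intermediate field of ℚ(ζ_ℓ)/ℚ. If p is a prime with p ≡ 2 (mod 3), then the p-rank of the ideal class group of L is even; that is, the subgroup of elements of the class group of L killed by p has cardinality p^{2k} for some nonnegative integer k. -/
open NumberField Pointwise nonZeroDivisors in
theorem aux_absNorm_smul {K : Type*} [Field K] [NumberField K] (σ : Gal(K/ℚ)) (I : Ideal (𝓞 K)) :
    Ideal.absNorm (σ • I) = Ideal.absNorm I := by
  have h := Ideal.relNorm_smul (R := ℤ) σ I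
  rw [Ideal.relNorm_int, Ideal.relNorm_int] at h
  have := congrArg Ideal.absNorm h
  simpa using this

open NumberField Pointwise nonZeroDivisors in
theorem aux_prod_smul {K : Type*} [Field K] [NumberField K] [IsGalois ℚ K] (I : Ideal (𝓞 K))
    (hI : I ≠ ⊥) :
    ∏ σ : Gal(K/ℚ), σ • I = Ideal.span {(Ideal.absNorm I : 𝓞 K)} := by
  have hle : Ideal.span {(Ideal.absNorm I : 𝓞 K)} ≤ ∏ σ : Gal(K/ℚ), σ • I := by
    have h1 : Ideal.span {(Ideal.absNorm I : 𝓞 K)} =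
        (Ideal.relNorm ℤ I).map (algebraMap ℤ (𝓞 K)) := by
      rw [Ideal.relNorm_int, Ideal.map_span]; simp
    rw [h1, Ideal.map_relNorm, Ideal.span_le]
    rintro _ ⟨a, ha, rfl⟩
    have h2 : (algebraMap ℤ (𝓞 K) ∘ Algebra.intNorm ℤ (𝓞 K)) a = ∏ σ : Gal(K/ℚ), σ • a := by
      apply RingOfIntegers.ext
      rw [Function.comp_apply, Algebra.intNorm_eq_norm]
      have h3 := Algebra.norm_eq_prod_automorphisms ℚ (a : K)
      rw [← Algebra.coe_norm_int] at h3
      have h4 : ((∏ σ : Gal(K/ℚ), σ • a : 𝓞 K) : K) = ∏ σ : Gal(K/ℚ), σ (a : K) := by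
        change algebraMap (𝓞 K) K _ = _
        rw [map_prod]
        rfl
      rw [h4, ← h3]
      simp
    rw [h2]
    exact Ideal.prod_mem_prod fun σ _ => Ideal.smul_mem_pointwise_smul σ a I ha
  obtain ⟨J, hJ⟩ := Ideal.dvd_iff_le.mpr hle
  have hn := congrArg Ideal.absNorm hJ
  have h0 : Ideal.absNorm I ≠ 0 := by rwa [Ne, Ideal.absNorm_eq_zero_iff]
  have h5 : Ideal.absNorm (Ideal.span {(Ideal.absNorm I : 𝓞 K)}) =
      Ideal.absNorm I ^ Module.finrank ℚ K := by
    rw [Ideal.absNorm_span_singleton,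
      show (Ideal.absNorm I : 𝓞 K) = algebraMap ℤ (𝓞 K) (Ideal.absNorm I) by simp,
      Algebra.norm_algebraMap, RingOfIntegers.rank]
    simp
  rw [map_mul, map_prod, h5] at hn
  simp only [aux_absNorm_smul, Finset.prod_const, Finset.card_univ] at hn
  rw [← Nat.card_eq_fintype_card, IsGalois.card_aut_eq_finrank] at hn
  have hJ1 : Ideal.absNorm J = 1 := by
    have := Nat.eq_of_mul_eq_mul_left (pow_pos (Nat.pos_of_ne_zero h0) _)
      ((mul_one _).trans hn)
    exact this.symm
  rw [Ideal.absNorm_eq_one_iff] at hJ1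
  rw [hJ, hJ1, Ideal.mul_top]

open NumberField Pointwise nonZeroDivisors in
/-- Galois action on nonzero ideals. -/
noncomputable def auxI {K : Type*} [Field K] [NumberField K] (σ : Gal(K/ℚ)) :
    (Ideal (𝓞 K))⁰ →* (Ideal (𝓞 K))⁰ where
  toFun I := ⟨σ • (I : Ideal (𝓞 K)), by
    rw [mem_nonZeroDivisors_iff_ne_zero]
    intro h
    have : (I : Ideal (𝓞 K)) = 0 := by
      rw [← inv_smul_smul σ (I : Ideal (𝓞 K)), h, smul_zero]
    exact nonZeroDivisors.coe_ne_zero I this⟩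
  map_one' := by ext1; exact smul_one σ
  map_mul' I J := by ext1; simp [smul_mul']

open NumberField Pointwise nonZeroDivisors in
/-- Galois action on classes. -/
noncomputable def auxC {K : Type*} [Field K] [NumberField K] (σ : Gal(K/ℚ))
    (x : ClassGroup (𝓞 K)) : ClassGroup (𝓞 K) :=
  ClassGroup.mk0 (auxI σ (ClassGroup.mk0_surjective x).choose)

open NumberField Pointwise nonZeroDivisors in
theorem auxC_mk0 {K : Type*} [Field K] [NumberField K] (σ : Gal(K/ℚ)) (I : (Ideal (𝓞 K))⁰) :
    auxC σ (ClassGroup.mk0 I) = ClassGroup.mk0 (auxI σ I) := by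
  have h := (ClassGroup.mk0_surjective (ClassGroup.mk0 I)).choose_spec
  unfold auxC
  set J := (ClassGroup.mk0_surjective (ClassGroup.mk0 I)).choose
  rw [ClassGroup.mk0_eq_mk0_iff] at h ⊢
  obtain ⟨x, y, hx, hy, h⟩ := h
  refine ⟨σ • x, σ • y, by rwa [Ne, smul_eq_zero_iff_eq], by rwa [Ne, smul_eq_zero_iff_eq], ?_⟩
  have := congrArg (fun A => σ • A) h
  simpa [smul_mul', Ideal.smul_closure, Set.smul_set_singleton, auxI] using this

open NumberField Pointwise nonZeroDivisors in
theorem aux_main (K : Type*) [Field K] [NumberField K] [IsGalois ℚ K]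
    (hK : Module.finrank ℚ K = 3) (p : ℕ) (hp : p.Prime) (hpmod : p % 3 = 2) :
    ∃ k : ℕ, Nat.card {x : ClassGroup (𝓞 K) // x ^ p = 1} = p ^ (2 * k) := by
  have : Fact p.Prime := ⟨hp⟩
  let A := {x : ClassGroup (𝓞 K) // x ^ p = 1}
  have hpg : ∃ n, Nat.card A = p ^ n := by
    have : IsPGroup p (powMonoidHom p : ClassGroup (𝓞 K) →* _).ker := by
      rintro ⟨g, hg⟩
      exact ⟨1, Subtype.ext (by simpa using hg)⟩
    obtain ⟨n, hn⟩ := IsPGroup.iff_card.mp this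
    exact ⟨n, hn⟩
  let act : MulAction Gal(K/ℚ) A :=
    { smul := fun σ x => ⟨auxC σ x.1, by
        obtain ⟨x, hx⟩ := x
        obtain ⟨I, rfl⟩ := ClassGroup.mk0_surjective x
        have h : auxC σ (ClassGroup.mk0 I ^ p) = auxC σ (ClassGroup.mk0 I) ^ p := by
          rw [← map_pow, auxC_mk0, auxC_mk0, map_pow, map_pow]
        have h1 : auxC σ (1 : ClassGroup (𝓞 K)) = 1 := by
          rw [← map_one ClassGroup.mk0, auxC_mk0, map_one]
        rw [← h, hx, h1]⟩
      one_smul := by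
        rintro ⟨x, hx⟩
        obtain ⟨I, rfl⟩ := ClassGroup.mk0_surjective x
        apply Subtype.ext
        change auxC 1 (ClassGroup.mk0 I) = _
        rw [auxC_mk0]
        congr 1
        ext1
        exact one_smul _ _
      mul_smul := by
        rintro σ τ ⟨x, hx⟩
        obtain ⟨I, rfl⟩ := ClassGroup.mk0_surjective x
        apply Subtype.ext
        change auxC (σ * τ) (ClassGroup.mk0 I) = auxC σ (auxC τ (ClassGroup.mk0 I))
        rw [auxC_mk0, auxC_mk0, auxC_mk0]
        congr 1
        ext1
        exact mul_smul _ _ _ }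
  have hcard : Nat.card Gal(K/ℚ) = 3 := by rw [IsGalois.card_aut_eq_finrank, hK]
  have : Fact (Nat.Prime 3) := ⟨Nat.prime_three⟩
  have hG : IsPGroup 3 Gal(K/ℚ) := IsPGroup.of_card (n := 1) (by simpa using hcard)
  have hmod := hG.card_modEq_card_fixedPoints A
  have hfix : ∀ x ∈ MulAction.fixedPoints Gal(K/ℚ) A, x.1 = 1 := by
    rintro ⟨x, hx⟩ h
    obtain ⟨I, rfl⟩ := ClassGroup.mk0_surjective x
    have h1 : ∀ σ : Gal(K/ℚ), ClassGroup.mk0 (auxI σ I) = ClassGroup.mk0 I := by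
      intro σ
      rw [← auxC_mk0]
      exact congrArg Subtype.val (h σ)
    have h2 : ClassGroup.mk0 (∏ σ : Gal(K/ℚ), auxI σ I) = ClassGroup.mk0 I ^ 3 := by
      rw [map_prod]
      simp only [h1, Finset.prod_const, Finset.card_univ]
      rw [← Nat.card_eq_fintype_card, hcard]
    have h3 : ((∏ σ : Gal(K/ℚ), auxI σ I : (Ideal (𝓞 K))⁰) : Ideal (𝓞 K)) =
        ∏ σ : Gal(K/ℚ), σ • (I : Ideal (𝓞 K)) := by
      rw [Submonoid.coe_finsetProd]
      rfl
    rw [aux_prod_smul _ (nonZeroDivisors.coe_ne_zero I)] at h3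
    have h4 : ClassGroup.mk0 (∏ σ : Gal(K/ℚ), auxI σ I) = 1 := by
      rw [ClassGroup.mk0_eq_one_iff (SetLike.coe_mem _), h3]
      exact ⟨_, rfl⟩
    have h5 : ClassGroup.mk0 I ^ 3 = 1 := h2.symm.trans h4
    have hco : Nat.Coprime 3 p := by
      rw [Nat.Prime.coprime_iff_not_dvd Nat.prime_three]
      omega
    have h6 := pow_gcd_eq_one.mpr ⟨h5, hx⟩
    rwa [hco.gcd_eq_one, pow_one] at h6
  have hone : (⟨1, one_pow p⟩ : A) ∈ MulAction.fixedPoints Gal(K/ℚ) A := by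
    intro σ
    apply Subtype.ext
    change auxC σ (1 : ClassGroup (𝓞 K)) = 1
    rw [← map_one ClassGroup.mk0, auxC_mk0, map_one]
  have hfc : Nat.card (MulAction.fixedPoints Gal(K/ℚ) A) = 1 := by
    rw [Nat.card_eq_one_iff_unique]
    refine ⟨⟨fun a b => ?_⟩, ⟨⟨_, hone⟩⟩⟩
    apply Subtype.ext
    apply Subtype.ext
    rw [hfix _ a.2, hfix _ b.2]
  rw [hfc] at hmod
  obtain ⟨n, hn⟩ := hpg
  rcases Nat.even_or_odd n with ⟨k, hk⟩ | ⟨k, hk⟩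
  · exact ⟨k, by rw [two_mul, ← hk]; exact hn⟩
  · exfalso
    have h7 : p ≡ 2 [MOD 3] := hpmod
    have h8 : p ^ n ≡ 2 [MOD 3] := by
      rw [hk, pow_succ, pow_mul]
      have h9 : p ^ 2 ≡ 1 [MOD 3] := (h7.pow 2).trans (by decide)
      have := (h9.pow k).mul h7
      simpa using this
    rw [hn] at hmod
    have := h8.symm.trans hmod
    revert this
    decide


instance (ℓ : ℕ+) : FiniteDimensional ℚ (CyclotomicField ℓ ℚ) :=
  @IsCyclotomicExtension.finiteDimensional {(ℓ : ℕ)} ℚ _ (CyclotomicField ℓ ℚ) _ _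
    (CyclotomicField.algebra ℓ ℚ) _ inferInstance

instance (ℓ : ℕ+) (L : IntermediateField ℚ (CyclotomicField ℓ ℚ)) : NumberField L := ⟨⟩

/-- Let `ℓ` be a prime with `ℓ ≡ 1 (mod 3)` and let `L` be the unique degree-3 intermediate
field of `ℚ(ζ_ℓ)/ℚ`.  If `p` is a prime with `p ≡ 2 (mod 3)`, then the `p`-rank of the
ideal class group of `L` is even: the subgroup of elements of the class group killed by `p`
has cardinality `p^(2k)` for some `k ≥ 0`. -/
theorem p_rank_classGroup_even (ℓ : ℕ+) (hℓ : (ℓ : ℕ).Prime) (hℓmod : (ℓ : ℕ) % 3 = 1)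
    (L : IntermediateField ℚ (CyclotomicField ℓ ℚ)) (hL : Module.finrank ℚ L = 3)
    (p : ℕ) (hp : p.Prime) (hpmod : p % 3 = 2) :
    ∃ k : ℕ,
      Nat.card {x : ClassGroup (NumberField.RingOfIntegers L) // x ^ p = 1} = p ^ (2 * k) := by
  have h1 : IsAbelianGalois ℚ (CyclotomicField ℓ ℚ) := by
    have h := @IsCyclotomicExtension.isAbelianGalois {(ℓ : ℕ)} ℚ (CyclotomicField ℓ ℚ) _ _
      (CyclotomicField.algebra ℓ ℚ) inferInstance
    convert h
    exact Subsingleton.elim _ _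
  have h2 := IsAbelianGalois.tower_bot ℚ L (CyclotomicField ℓ ℚ)
  have h3 := h2.toIsGalois
  have h4 : @IsGalois ℚ _ L _ DivisionRing.toRatAlgebra := by
    convert h3
  refine @aux_main L _ _ h4 ?_ p hp hpmod
  convert hL
end

section
/- Every nonzero simple module over the group algebra F_3[A_4], where A_4 is the alternating group on 4 letters and F_3 the field with 3 elements, is finite dimensional over F_3 of dimension either 1 or 3; moreover, every 1-dimensional simple F_3[A_4]-module is the trivial module (every group element acts as the identity). -/
abbrev GG := alternatingGroup (Fin 4)

def ga : GG := ⟨Equiv.swap 0 1 * Equiv.swap 2 3, Equiv.Perm.mem_alternatingGroup.2 (by decide)⟩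
def gb : GG := ⟨Equiv.swap 0 2 * Equiv.swap 1 3, Equiv.Perm.mem_alternatingGroup.2 (by decide)⟩
def gc0 : GG := ⟨Equiv.swap 1 2 * Equiv.swap 2 3, Equiv.Perm.mem_alternatingGroup.2 (by decide)⟩

set_option maxRecDepth 100000 in
lemma gen_all : ∀ g : GG, ∃ i : Fin 2, ∃ j : Fin 2, ∃ k : Fin 3,
    g = ga ^ (i : ℕ) * gb ^ (j : ℕ) * gc0 ^ (k : ℕ) := by
  decide

lemma rel_a : ga * ga = 1 := by decide
lemma rel_b : gb * gb = 1 := by decide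
lemma rel_ab : ga * gb = gb * ga := by decide
lemma rel_c : gc0 * gc0 * gc0 = 1 := by decide
lemma rel_ca : gc0 * ga = gb * gc0 := by decide
lemma rel_cb : gc0 * gb = ga * gb * gc0 := by decide

lemma span_stable {M : Type} [AddCommGroup M] [Module (ZMod 3) M] (s : Set M)
    (A : M →ₗ[ZMod 3] M) (h : ∀ x ∈ s, A x ∈ Submodule.span (ZMod 3) s) :
    ∀ x ∈ Submodule.span (ZMod 3) s, A x ∈ Submodule.span (ZMod 3) s := by
  intro x hx
  exact (Submodule.map_span_le A s _).2 h (Submodule.mem_map_of_mem hx)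

lemma three_zero {M : Type} [AddCommGroup M] [Module (ZMod 3) M] (x : M) : x + x + x = 0 := by
  have h : ((1 : ZMod 3) + 1 + 1) • x = 0 := by
    rw [show ((1 : ZMod 3) + 1 + 1) = 0 by decide, zero_smul]
  simpa [add_smul] using h

lemma core {M : Type} [AddCommGroup M] [Module (ZMod 3) M] [Nontrivial M]
    (A B C : M →ₗ[ZMod 3] M)
    (hA : ∀ x, A (A x) = x) (hB : ∀ x, B (B x) = x) (hAB : ∀ x, A (B x) = B (A x))
    (hC : ∀ x, C (C (C x)) = x) (hCA : ∀ x, C (A x) = B (C x))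
    (hCB : ∀ x, C (B x) = A (B (C x)))
    (hS : ∀ N : Submodule (ZMod 3) M, (∀ x ∈ N, A x ∈ N) → (∀ x ∈ N, B x ∈ N) →
      (∀ x ∈ N, C x ∈ N) → (∃ x ∈ N, x ≠ 0) → N = ⊤) :
    Module.Finite (ZMod 3) M ∧
    ((Module.finrank (ZMod 3) M = 1 ∧ (∀ x, A x = x ∧ B x = x ∧ C x = x)) ∨
      Module.finrank (ZMod 3) M = 3) := by
  have hAC : ∀ x, A (C x) = C (A (B x)) := by
    intro x; rw [hCA, hCB, ← hAB, hB]
  have t3 := three_zero (M := M)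
  have two : ∀ x : M, -x = x → x = 0 := by
    intro x h
    have := t3 x
    nth_rewrite 1 [← h] at this
    simpa using this
  by_cases h1 : ∃ m, m ≠ 0 ∧ A m = m ∧ B m = m
  · obtain ⟨v, hv, hvA, hvB, hvC⟩ : ∃ m, m ≠ 0 ∧ A m = m ∧ B m = m ∧ C m = m := by
      have step : ∀ m, A m = m → B m = m → A (C m - m) = C m - m ∧ B (C m - m) = C m - m := by
        intro m a b
        constructor
        · rw [map_sub, hAC, b, a]
        · rw [map_sub, ← hCA, b, a]
      obtain ⟨m, hm, a, b⟩ := h1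
      by_cases c1 : C m - m = 0
      · exact ⟨m, hm, a, b, sub_eq_zero.1 c1⟩
      obtain ⟨a', b'⟩ := step m a b
      by_cases c2 : C (C m - m) - (C m - m) = 0
      · exact ⟨_, c1, a', b', sub_eq_zero.1 c2⟩
      obtain ⟨a'', b''⟩ := step _ a' b'
      refine ⟨_, c2, a'', b'', ?_⟩
      rw [← sub_eq_zero]
      simp only [map_sub, hC]
      have e1 := t3 (C m)
      have e2 := t3 (C (C m))
      calc _ = (C m + C m + C m) - (C (C m) + C (C m) + C (C m)) := by abel
        _ = 0 := by rw [e1, e2, sub_zero]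
    have htop : Submodule.span (ZMod 3) {v} = ⊤ := by
      apply hS
      · apply span_stable; rintro x rfl; rw [hvA]; exact Submodule.mem_span_singleton_self _
      · apply span_stable; rintro x rfl; rw [hvB]; exact Submodule.mem_span_singleton_self _
      · apply span_stable; rintro x rfl; rw [hvC]; exact Submodule.mem_span_singleton_self _
      · exact ⟨v, Submodule.mem_span_singleton_self _, hv⟩
    refine ⟨⟨⟨{v}, by simpa using htop⟩⟩, Or.inl ⟨?_, ?_⟩⟩
    · rw [← finrank_top, ← htop, finrank_span_singleton hv]
    · intro x
      have hx : x ∈ Submodule.span (ZMod 3) {v} := htop ▸ Submodule.mem_top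
      obtain ⟨k, rfl⟩ := Submodule.mem_span_singleton.1 hx
      simp only [map_smul, hvA, hvB, hvC, and_self]
  · have Cne : ∀ x, x ≠ 0 → C x ≠ 0 := by
      intro x hx h; apply hx; rw [← hC x, h]; simp
    obtain ⟨v, hv, hvA, hvB⟩ : ∃ v, v ≠ 0 ∧ A v = v ∧ B v = -v := by
      obtain ⟨m, hm⟩ := exists_ne (0 : M)
      by_cases c1 : m + A m + B m + A (B m) = 0
      swap
      · exfalso; apply h1; refine ⟨_, c1, ?_, ?_⟩
        · simp only [map_add, hA, hB, hAB]; abel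
        · simp only [map_add, hA, hB, hAB]; abel
      by_cases c2 : m + A m - B m - A (B m) = 0
      swap
      · refine ⟨_, c2, ?_, ?_⟩
        · simp only [map_add, map_sub, hA, hB, hAB]; abel
        · simp only [map_add, map_sub, hA, hB, hAB]; abel
      by_cases c3 : m - A m + B m - A (B m) = 0
      swap
      · have e1 : A (m - A m + B m - A (B m)) = -(m - A m + B m - A (B m)) := by
          simp only [map_add, map_sub, hA, hB, hAB]; abel
        have e2 : B (m - A m + B m - A (B m)) = (m - A m + B m - A (B m)) := by
          simp only [map_add, map_sub, hA, hB, hAB]; abel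
        generalize m - A m + B m - A (B m) = w at c3 e1 e2
        refine ⟨C (C w), Cne _ (Cne _ c3), ?_, ?_⟩
        · simp only [hAC, ← hCA, e1, e2, map_neg, neg_neg]
        · simp only [hAC, ← hCA, e1, e2, map_neg, neg_neg]
      by_cases c4 : m - A m - B m + A (B m) = 0
      swap
      · have e1 : A (m - A m - B m + A (B m)) = -(m - A m - B m + A (B m)) := by
          simp only [map_add, map_sub, hA, hB, hAB]; abel
        have e2 : B (m - A m - B m + A (B m)) = -(m - A m - B m + A (B m)) := by
          simp only [map_add, map_sub, hA, hB, hAB]; abel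
        generalize m - A m - B m + A (B m) = w at c4 e1 e2
        refine ⟨C w, Cne _ c4, ?_, ?_⟩
        · simp only [hAC, e1, e2, map_neg, neg_neg]
        · simp only [← hCA, e1, map_neg]
      exfalso; apply hm
      calc m = (m + A m + B m + A (B m)) + (m + A m - B m - A (B m))
            + (m - A m + B m - A (B m)) + (m - A m - B m + A (B m)) - (m + m + m) := by abel
        _ = 0 := by rw [c1, c2, c3, c4, t3 m]; simp
    have wA : A (C v) = -C v := by simp only [hAC, hvA, hvB, map_neg]
    have wB : B (C v) = C v := by simp only [← hCA, hvA]
    have uA : A (C (C v)) = -C (C v) := by rw [hAC, wB, wA, map_neg]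
    have uB : B (C (C v)) = -C (C v) := by rw [← hCA, wA, map_neg]
    have hw := Cne _ hv
    have hu := Cne _ hw
    have hli : LinearIndependent (ZMod 3) ![v, C v, C (C v)] := by
      rw [Fintype.linearIndependent_iff]
      intro g hg
      simp only [Fin.sum_univ_three, Matrix.cons_val] at hg
      have eA := congrArg A hg
      simp only [map_add, map_smul, hvA, wA, uA, map_zero, smul_neg] at eA
      have eB := congrArg B hg
      simp only [map_add, map_smul, hvB, wB, uB, map_zero, smul_neg] at eB
      have z0 : g 0 • v = 0 := by
        apply two
        rw [neg_eq_iff_add_eq_zero]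
        calc _ = (g 0 • v + g 1 • C v + g 2 • C (C v)) + (g 0 • v + -(g 1 • C v) + -(g 2 • C (C v))) := by abel
          _ = 0 := by rw [hg, eA, add_zero]
      have z1 : g 1 • C v = 0 := by
        apply two
        rw [neg_eq_iff_add_eq_zero]
        calc _ = (g 0 • v + g 1 • C v + g 2 • C (C v)) + (-(g 0 • v) + g 1 • C v + -(g 2 • C (C v))) := by abel
          _ = 0 := by rw [hg, eB, add_zero]
      have z2 : g 2 • C (C v) = 0 := by
        rw [z0, z1] at hg; simpa using hg
      have : Fact (Nat.Prime 3) := ⟨Nat.prime_three⟩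
      intro i
      fin_cases i
      · exact (smul_eq_zero.1 z0).resolve_right hv
      · exact (smul_eq_zero.1 z1).resolve_right hw
      · exact (smul_eq_zero.1 z2).resolve_right hu
    have htop : Submodule.span (ZMod 3) (Set.range ![v, C v, C (C v)]) = ⊤ := by
      have m0 : v ∈ Submodule.span (ZMod 3) (Set.range ![v, C v, C (C v)]) :=
        Submodule.subset_span ⟨0, rfl⟩
      have m1 : C v ∈ Submodule.span (ZMod 3) (Set.range ![v, C v, C (C v)]) :=
        Submodule.subset_span ⟨1, rfl⟩
      have m2 : C (C v) ∈ Submodule.span (ZMod 3) (Set.range ![v, C v, C (C v)]) :=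
        Submodule.subset_span ⟨2, rfl⟩
      apply hS
      · apply span_stable
        rintro x ⟨i, rfl⟩
        fin_cases i
        · simpa [hvA] using m0
        · simpa [wA] using m1
        · simpa [uA] using m2
      · apply span_stable
        rintro x ⟨i, rfl⟩
        fin_cases i
        · simpa [hvB] using m0
        · simpa [wB] using m1
        · simpa [uB] using m2
      · apply span_stable
        rintro x ⟨i, rfl⟩
        fin_cases i
        · exact m1
        · exact m2
        · simpa [hC] using m0
      · exact ⟨v, m0, hv⟩
    refine ⟨Module.Finite.of_basis (Module.Basis.mk hli htop.ge), Or.inr ?_⟩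
    have : Fact (Nat.Prime 3) := ⟨Nat.prime_three⟩
    rw [Module.finrank_eq_card_basis (Module.Basis.mk hli htop.ge)]
    simp

/-- Every simple module over the group algebra `𝔽₃[A₄]` is finite dimensional over `𝔽₃` of
dimension `1` or `3`, and every `1`-dimensional simple module is the trivial module:
every group element acts as the identity. -/
theorem simple_modules_of_F3_A4 (M : Type) [AddCommGroup M]
    [Module (ZMod 3) M]
    [Module (MonoidAlgebra (ZMod 3) (alternatingGroup (Fin 4))) M]
    [IsScalarTower (ZMod 3) (MonoidAlgebra (ZMod 3) (alternatingGroup (Fin 4))) M]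
    [IsSimpleModule (MonoidAlgebra (ZMod 3) (alternatingGroup (Fin 4))) M] :
    Module.Finite (ZMod 3) M ∧
    (Module.finrank (ZMod 3) M = 1 ∨ Module.finrank (ZMod 3) M = 3) ∧
    (Module.finrank (ZMod 3) M = 1 →
      ∀ (g : alternatingGroup (Fin 4)) (m : M),
        MonoidAlgebra.of (ZMod 3) (alternatingGroup (Fin 4)) g • m = m) := by
  have hnt : Nontrivial M :=
    IsSimpleModule.nontrivial (MonoidAlgebra (ZMod 3) (alternatingGroup (Fin 4))) M
  let T : GG →* (M →ₗ[ZMod 3] M) :=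
    ((Algebra.lsmul (ZMod 3) (ZMod 3) M :
      MonoidAlgebra (ZMod 3) GG →ₐ[ZMod 3] Module.End (ZMod 3) M) : _ →* _).comp
      (MonoidAlgebra.of (ZMod 3) GG)
  have hT : ∀ g m, T g m = MonoidAlgebra.of (ZMod 3) GG g • m := fun g m => rfl
  have hmul : ∀ g h m, T g (T h m) = T (g * h) m := by
    intro g h m; rw [map_mul]; rfl
  have hone : ∀ m, T 1 m = m := by intro m; rw [map_one]; rfl
  have hgen : ∀ P : GG → Prop, P 1 → (∀ g, P g → P (ga * g)) → (∀ g, P g → P (gb * g)) →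
      (∀ g, P g → P (gc0 * g)) → ∀ g, P g := by
    intro P p1 pa pb pc g
    obtain ⟨i, j, k, rfl⟩ := gen_all g
    have hk : ∀ n : ℕ, P (gc0 ^ n) := by
      intro n; induction n with
      | zero => simpa using p1
      | succ n ih => rw [pow_succ']; exact pc _ ih
    have hj : ∀ n l : ℕ, P (gb ^ n * gc0 ^ l) := by
      intro n l; induction n with
      | zero => simpa using hk l
      | succ n ih => rw [pow_succ', mul_assoc]; exact pb _ ih
    have hi : ∀ n m l : ℕ, P (ga ^ n * (gb ^ m * gc0 ^ l)) := by
      intro n m l; induction n with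
      | zero => simpa using hj m l
      | succ n ih => rw [pow_succ', mul_assoc]; exact pa _ ih
    rw [mul_assoc]; exact hi _ _ _
  obtain ⟨hf, h⟩ := core (T ga) (T gb) (T gc0)
    (fun x => by rw [hmul, rel_a, hone]) (fun x => by rw [hmul, rel_b, hone])
    (fun x => by rw [hmul, hmul, rel_ab]) (fun x => by rw [hmul, hmul, rel_c, hone])
    (fun x => by rw [hmul, hmul, rel_ca]) (fun x => by rw [hmul, hmul, hmul, rel_cb])
    (by
      intro N nA nB nC ⟨x, hx, hx0⟩
      have hall : ∀ g, ∀ x ∈ N, T g x ∈ N := by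
        apply hgen
        · intro x hx; rwa [hone]
        · intro g ih x hx; rw [← hmul]; exact nA _ (ih x hx)
        · intro g ih x hx; rw [← hmul]; exact nB _ (ih x hx)
        · intro g ih x hx; rw [← hmul]; exact nC _ (ih x hx)
      let N' : Submodule (MonoidAlgebra (ZMod 3) (alternatingGroup (Fin 4))) M :=
        { carrier := N
          add_mem' := fun ha hb => N.add_mem ha hb
          zero_mem' := N.zero_mem
          smul_mem' := by
            intro r y hy
            induction r using MonoidAlgebra.induction_on with
            | of g => exact hall g y hy
            | add f g hf hg => rw [add_smul]; exact N.add_mem hf hg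
            | smul k f hf => rw [smul_assoc]; exact N.smul_mem k hf }
      have hmem : ∀ y, y ∈ N' ↔ y ∈ N := fun y => Iff.rfl
      rcases eq_bot_or_eq_top N' with hb | ht
      · exfalso; apply hx0
        have : x ∈ N' := hx
        rw [hb] at this
        simpa using this
      · rw [eq_top_iff]; intro y _
        rw [← hmem, ht]; trivial)
  refine ⟨hf, h.imp (fun h => h.1) id, ?_⟩
  intro h1
  rcases h with ⟨_, h⟩ | h
  · apply hgen
    · exact hone
    · intro g ih m; rw [← hT, ← hmul, hT g, ih, (h m).1]
    · intro g ih m; rw [← hT, ← hmul, hT g, ih, (h m).2.1]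
    · intro g ih m; rw [← hT, ← hmul, hT g, ih, (h m).2.2]
  · omega
end

section
/- The groups SL(2, ℤ/9ℤ) and SL(2, F_3[ε]) are isomorphic as groups, where F_3[ε] = F_3[X]/(X^2) is the ring of dual numbers over the field with 3 elements. -/
namespace SL9

/-- the additive map `x ↦ 3x` from `ℤ/3` to `ℤ/9` -/
def t (x : ZMod 3) : ZMod 9 := 3 * (x.val : ZMod 9)

/-- reduction mod 3 -/
def r (x : ZMod 9) : ZMod 3 := (x.val : ZMod 3)

theorem t_add : ∀ x y, t (x + y) = t x + t y := by decide +kernel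
theorem t_sub : ∀ x y, t (x - y) = t x - t y := by decide +kernel
theorem t_mul : ∀ x y, t x * y = t (x * r y) := by decide +kernel
theorem t_t : ∀ x y, t x * t y = 0 := by decide +kernel
theorem t_zero : ∀ x, t x = 0 → x = 0 := by decide +kernel
theorem t_z : t 0 = 0 := by decide +kernel
theorem t_inj : ∀ x y, t x = t y → x = y := by decide +kernel
theorem r_t : ∀ x y, r (x + t y) = r x := by decide +kernel
theorem r_one : r 1 = 1 := by decide +kernel
theorem r_det (x y z w : ZMod 9) : r (x * y - z * w) = r x * r y - r z * r w := by
  have h1 : ∀ x y, r (x * y) = r x * r y := by decide +kernel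
  have h2 : ∀ x y, r (x - y) = r x - r y := by decide +kernel
  rw [h2, h1, h1]
theorem t_surj : ∀ x y, r x = r y → ∃ z, x = y + t z := by decide +kernel

theorem key_mul (x y z w : ZMod 9) (x' y' z' w' : ZMod 3) :
    (x + t x') * (y + t y') + (z + t z') * (w + t w') =
      x * y + z * w + t ((r x * y' + r y * x') + (r z * w' + r w * z')) := by
  have h1 := t_mul x' y
  have h2 := t_mul y' x
  have h3 := t_mul z' w
  have h4 := t_mul w' z
  simp only [t_add, mul_comm (r _)]
  linear_combination h1 + h2 + h3 + h4 + t_t x' y' + t_t z' w'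

theorem key_det (x y z w : ZMod 9) (x' y' z' w' : ZMod 3) :
    (x + t x') * (y + t y') - (z + t z') * (w + t w') =
      x * y - z * w + t ((r x * y' + r y * x') - (r z * w' + r w * z')) := by
  have h1 := t_mul x' y
  have h2 := t_mul y' x
  have h3 := t_mul z' w
  have h4 := t_mul w' z
  simp only [t_add, t_sub, mul_comm (r _)]
  linear_combination h1 + h2 - h3 - h4 + t_t x' y' - t_t z' w'

/-! A section of `SL(2, ℤ/9) → SL(2, ℤ/3)`, entry by entry (base 9 lookup). -/

def sA (a b c d : ZMod 3) : ZMod 9 :=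
  ((19421024459582765195361040708733155682599694061123818204098518592255479787779 / 9 ^ (27 * a.val + 9 * b.val + 3 * c.val + d.val) % 9 : ℕ) : ZMod 9)

def sB (a b c d : ZMod 3) : ZMod 9 :=
  ((12138294448916288613255942477182835035973587192405771206935813849759928308987 / 9 ^ (27 * a.val + 9 * b.val + 3 * c.val + d.val) % 9 : ℕ) : ZMod 9)

def sC (a b c d : ZMod 3) : ZMod 9 :=
  ((12137965570959016408058195544960306053031514883167174351771982516924120816907 / 9 ^ (27 * a.val + 9 * b.val + 3 * c.val + d.val) % 9 : ℕ) : ZMod 9)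

def sD (a b c d : ZMod 3) : ZMod 9 :=
  ((2429796605101440989542627206702366793786442986149055116748418203422945603651 / 9 ^ (27 * a.val + 9 * b.val + 3 * c.val + d.val) % 9 : ℕ) : ZMod 9)

theorem s_spec : ∀ a b c d : ZMod 3, a * d - b * c = 1 →
    r (sA a b c d) = a ∧ r (sB a b c d) = b ∧ r (sC a b c d) = c ∧ r (sD a b c d) = d ∧
    sA a b c d * sD a b c d - sB a b c d * sC a b c d = 1 := by decide +kernel

theorem s_mul : ∀ a b c d : ZMod 3, a * d - b * c = 1 → ∀ e f g h : ZMod 3, e * h - f * g = 1 →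
    sA (a * e + b * g) (a * f + b * h) (c * e + d * g) (c * f + d * h) =
      sA a b c d * sA e f g h + sB a b c d * sC e f g h ∧
    sB (a * e + b * g) (a * f + b * h) (c * e + d * g) (c * f + d * h) =
      sA a b c d * sB e f g h + sB a b c d * sD e f g h ∧
    sC (a * e + b * g) (a * f + b * h) (c * e + d * g) (c * f + d * h) =
      sC a b c d * sA e f g h + sD a b c d * sC e f g h ∧
    sD (a * e + b * g) (a * f + b * h) (c * e + d * g) (c * f + d * h) =
      sC a b c d * sB e f g h + sD a b c d * sD e f g h := by decide +kernel

abbrev G := Matrix.SpecialLinearGroup (Fin 2) (DualNumber (ZMod 3))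

/-- first component of the entries -/
def p (m : G) (i j : Fin 2) : ZMod 3 := TrivSqZeroExt.fst (m.1 i j)
/-- second component of the entries -/
def q (m : G) (i j : Fin 2) : ZMod 3 := TrivSqZeroExt.snd (m.1 i j)

theorem p_det (m : G) : p m 0 0 * p m 1 1 - p m 0 1 * p m 1 0 = 1 := by
  have h := congrArg TrivSqZeroExt.fst m.2
  rw [Matrix.det_fin_two] at h
  simpa [p] using h

theorem q_det (m : G) : (p m 0 0 * q m 1 1 + p m 1 1 * q m 0 0) -
    (p m 0 1 * q m 1 0 + p m 1 0 * q m 0 1) = 0 := by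
  have h := congrArg TrivSqZeroExt.snd m.2
  rw [Matrix.det_fin_two] at h
  simp at h
  simp only [p, q]
  linear_combination h

theorem p_mul (m n : G) (i j : Fin 2) : p (m * n) i j = p m i 0 * p n 0 j + p m i 1 * p n 1 j := by
  simp [p, Matrix.mul_apply, Fin.sum_univ_two]

theorem q_mul (m n : G) (i j : Fin 2) : q (m * n) i j =
    (p m i 0 * q n 0 j + p n 0 j * q m i 0) + (p m i 1 * q n 1 j + p n 1 j * q m i 1) := by
  simp [p, q, Matrix.mul_apply, Fin.sum_univ_two]
  ring

def S (f : ZMod 3 → ZMod 3 → ZMod 3 → ZMod 3 → ZMod 9) (m : G) : ZMod 9 :=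
  f (p m 0 0) (p m 0 1) (p m 1 0) (p m 1 1)

def phi (m : G) : Matrix.SpecialLinearGroup (Fin 2) (ZMod 9) :=
  ⟨!![S sA m + t (q m 0 0), S sB m + t (q m 0 1); S sC m + t (q m 1 0), S sD m + t (q m 1 1)], by
    obtain ⟨h1, h2, h3, h4, h5⟩ := s_spec _ _ _ _ (p_det m)
    rw [Matrix.det_fin_two_of, key_det]
    simp only [S]
    rw [h1, h2, h3, h4, h5, q_det, t_z, add_zero]⟩

theorem phi_mul (m n : G) : phi (m * n) = phi m * phi n := by
  obtain ⟨h1, h2, h3, h4, -⟩ := s_spec _ _ _ _ (p_det m)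
  obtain ⟨k1, k2, k3, k4, -⟩ := s_spec _ _ _ _ (p_det n)
  obtain ⟨e1, e2, e3, e4⟩ := s_mul _ _ _ _ (p_det m) _ _ _ _ (p_det n)
  apply Subtype.ext
  rw [Matrix.SpecialLinearGroup.coe_mul]
  simp only [phi, Matrix.mul_fin_two, key_mul, S, h1, h2, h3, h4, k1, k2, k3, k4]
  simp only [← e1, ← e2, ← e3, ← e4, ← p_mul, ← q_mul]

theorem phi_inj : Function.Injective phi := by
  intro m n h
  obtain ⟨h1, h2, h3, h4, -⟩ := s_spec _ _ _ _ (p_det m)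
  obtain ⟨k1, k2, k3, k4, -⟩ := s_spec _ _ _ _ (p_det n)
  have e (i j : Fin 2) : (phi m).1 i j = (phi n).1 i j := by rw [h]
  have e00 := e 0 0
  have e01 := e 0 1
  have e10 := e 1 0
  have e11 := e 1 1
  simp [phi, S] at e00 e01 e10 e11
  have f00 := congrArg r e00
  have f01 := congrArg r e01
  have f10 := congrArg r e10
  have f11 := congrArg r e11
  rw [r_t, r_t] at f00 f01 f10 f11
  rw [h1, k1] at f00
  rw [h2, k2] at f01
  rw [h3, k3] at f10
  rw [h4, k4] at f11
  rw [f00, f01, f10, f11] at e00 e01 e10 e11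
  have g00 := t_inj _ _ (add_left_cancel e00)
  have g01 := t_inj _ _ (add_left_cancel e01)
  have g10 := t_inj _ _ (add_left_cancel e10)
  have g11 := t_inj _ _ (add_left_cancel e11)
  apply Subtype.ext
  ext i j
  · fin_cases i <;> fin_cases j <;> assumption
  · fin_cases i <;> fin_cases j <;> assumption

def dn (x y : ZMod 3) : DualNumber (ZMod 3) := (x, y)

theorem fst_dn (x y : ZMod 3) : TrivSqZeroExt.fst (dn x y) = x := rfl
theorem snd_dn (x y : ZMod 3) : TrivSqZeroExt.snd (dn x y) = y := rfl

theorem phi_surj : Function.Surjective phi := by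
  intro M
  have hM := M.2
  rw [Matrix.det_fin_two] at hM
  have hr := congrArg r hM
  rw [r_det, r_one] at hr
  obtain ⟨h1, h2, h3, h4, h5⟩ := s_spec _ _ _ _ hr
  obtain ⟨a, ha⟩ := t_surj _ _ h1.symm
  obtain ⟨b, hb⟩ := t_surj _ _ h2.symm
  obtain ⟨c, hc⟩ := t_surj _ _ h3.symm
  obtain ⟨d, hd⟩ := t_surj _ _ h4.symm
  have hs := key_det
    (sA (r (M.1 0 0)) (r (M.1 0 1)) (r (M.1 1 0)) (r (M.1 1 1)))
    (sD (r (M.1 0 0)) (r (M.1 0 1)) (r (M.1 1 0)) (r (M.1 1 1)))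
    (sB (r (M.1 0 0)) (r (M.1 0 1)) (r (M.1 1 0)) (r (M.1 1 1)))
    (sC (r (M.1 0 0)) (r (M.1 0 1)) (r (M.1 1 0)) (r (M.1 1 1)))
    a d b c
  rw [← ha, ← hb, ← hc, ← hd, h1, h2, h3, h4, h5, hM] at hs
  have hs' := t_zero _ (left_eq_add.mp hs)
  refine ⟨⟨!![dn (r (M.1 0 0)) a, dn (r (M.1 0 1)) b; dn (r (M.1 1 0)) c, dn (r (M.1 1 1)) d], ?_⟩, ?_⟩
  · rw [Matrix.det_fin_two_of]
    ext
    · exact hr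
    · simp [fst_dn, snd_dn]
      linear_combination hs'
  · apply Subtype.ext
    ext i j
    fin_cases i <;> fin_cases j
    · exact ha.symm
    · exact hb.symm
    · exact hc.symm
    · exact hd.symm

end SL9

/-- The groups `SL(2, ℤ/9ℤ)` and `SL(2, 𝔽₃[ε])` are isomorphic, where `𝔽₃[ε]` is the ring
of dual numbers over the field with three elements. -/
theorem sl2_zmod9_iso_sl2_dualNumbers :
    Nonempty (Matrix.SpecialLinearGroup (Fin 2) (ZMod 9) ≃*
      Matrix.SpecialLinearGroup (Fin 2) (DualNumber (ZMod 3))) := by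
  exact ⟨(MulEquiv.ofBijective (MonoidHom.mk' SL9.phi SL9.phi_mul)
    ⟨SL9.phi_inj, SL9.phi_surj⟩).symm⟩
end
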